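/- Assume Ω is a bounded C¹ domain, b is Lipschitz with b(0)=0, the origin is globally asymptotically stable for Ẋ = b(X), b·ν < 0 on ∂Ω, b(x)·x ≤ −b₀|x|² on B_{r₀}, and a^ε ∈ C(Q̄;𝕊ⁿ(θ₀)). Let Π be a relatively open subset of ∂Ω and fix δ ∈ (0, r₀). Then there exist T_δ > 0 and ε₀ ∈ (0,1), depending only on δ, θ₀, b, Π and Ω, such that: if, for ε ∈ (0,ε₀), u^ε ∈ C(Q̄) ∩ C^{2,1}(Q) is a classical solution of (L) satisfying, for some T(ε) ∈ (T_δ, ∞], u^ε ≤ 1 in Ω×[0,T(ε)) and u^ε ≤ 0 in (B_δ ∪ Π)×[0,T(ε)), then u^ε(x,t) ≤ δ for all (x,t) ∈ Ω^Π_δ × [T_δ, T(ε)). -/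

import Mathlib

open Set Filter Metric Topology
open scoped ENNReal

noncomputable section

/-- `n`-dimensional Euclidean space. -/
abbrev Eu (n : ℕ) := EuclideanSpace ℝ (Fin n)

variable {n : ℕ}

/-- Euclidean dot product. -/
def dotp (x y : Eu n) : ℝ := ∑ i, x i * y i

/-- The quadratic form `A p · p` of a matrix `A`. -/
def mquad (A : Matrix (Fin n) (Fin n) ℝ) (p : Eu n) : ℝ := ∑ i, ∑ j, A i j * p i * p j

/-- `A ∈ 𝕊ⁿ(θ)`: symmetric with `θ I ≤ A ≤ θ⁻¹ I`. -/
def memS (θ : ℝ) (A : Matrix (Fin n) (Fin n) ℝ) : Prop :=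
  A.IsSymm ∧ ∀ p : Eu n, θ * ‖p‖ ^ 2 ≤ mquad A p ∧ mquad A p ≤ θ⁻¹ * ‖p‖ ^ 2

/-- order of symmetric matrices (via quadratic forms). -/
def mle (A B : Matrix (Fin n) (Fin n) ℝ) : Prop := ∀ p : Eu n, mquad A p ≤ mquad B p

/-- trace of the product `A·H`. -/
def trMul (A H : Matrix (Fin n) (Fin n) ℝ) : ℝ := ∑ i, ∑ j, A i j * H j i

/-- the Pucci maximal operator associated with `𝕊ⁿ(θ)`. -/
def pucci (θ : ℝ) (X : Matrix (Fin n) (Fin n) ℝ) : ℝ :=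
  sSup ((fun A => trMul A X) '' {A | memS θ A})

/-- time derivative of `u(x,t)`. -/
def tD (u : Eu n → ℝ → ℝ) (x : Eu n) (t : ℝ) : ℝ := deriv (u x) t

/-- spatial gradient of `u(x,t)`. -/
def sG (u : Eu n → ℝ → ℝ) (x : Eu n) (t : ℝ) : Eu n := gradient (fun y => u y t) x

/-- spatial Hessian matrix of `u(x,t)`. -/
def sH (u : Eu n → ℝ → ℝ) (x : Eu n) (t : ℝ) : Matrix (Fin n) (Fin n) ℝ :=
  fun i j => fderiv ℝ (fun y => sG u y t i) x (EuclideanSpace.single j 1)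

/-- Hessian matrix of a static function. -/
def hessS (v : Eu n → ℝ) (x : Eu n) : Matrix (Fin n) (Fin n) ℝ :=
  fun i j => fderiv ℝ (fun y => gradient v y i) x (EuclideanSpace.single j 1)

/-- closed parabolic cylinder `Q̄_T = closure Ω × [0,T]` (with `T ∈ (0,∞]`). -/
def cylC (Ω : Set (Eu n)) (T : ℝ≥0∞) : Set (Eu n × ℝ) :=
  {p | p.1 ∈ closure Ω ∧ 0 ≤ p.2 ∧ ENNReal.ofReal p.2 ≤ T}

/-- open parabolic cylinder `Q_T = Ω × (0,T)`. -/
def cylO (Ω : Set (Eu n)) (T : ℝ≥0∞) : Set (Eu n × ℝ) :=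
  {p | p.1 ∈ Ω ∧ 0 < p.2 ∧ ENNReal.ofReal p.2 < T}

/-- `u ∈ C^{2,1}(Q_T)`. -/
def C21 (u : Eu n → ℝ → ℝ) (Ω : Set (Eu n)) (T : ℝ≥0∞) : Prop :=
  (∀ x ∈ Ω, ∀ t : ℝ, 0 < t → ENNReal.ofReal t < T →
     ContDiffAt ℝ 2 (fun y => u y t) x ∧ DifferentiableAt ℝ (u x) t) ∧
  ContinuousOn (fun p : Eu n × ℝ => tD u p.1 p.2) (cylO Ω T) ∧
  ContinuousOn (fun p : Eu n × ℝ => sH u p.1 p.2) (cylO Ω T)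

/-- `u ∈ C(Q̄_T) ∩ C^{2,1}(Q_T)`. -/
def Classical21 (u : Eu n → ℝ → ℝ) (Ω : Set (Eu n)) (T : ℝ≥0∞) : Prop :=
  ContinuousOn (fun p : Eu n × ℝ => u p.1 p.2) (cylC Ω T) ∧ C21 u Ω T

/-- a coefficient field in `C(Q̄_T; 𝕊ⁿ(θ))`. -/
def MatC (θ : ℝ) (A : Eu n → ℝ → Matrix (Fin n) (Fin n) ℝ) (Ω : Set (Eu n))
    (T : ℝ≥0∞) : Prop :=
  ContinuousOn (fun p : Eu n × ℝ => A p.1 p.2) (cylC Ω T) ∧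
  ∀ p ∈ cylC Ω T, memS θ (A p.1 p.2)

/-- `u` is a classical solution of `u_t = ε tr[A D²u] + b·Du` in `Q_T`. -/
def SolveL (ε : ℝ) (A : Eu n → ℝ → Matrix (Fin n) (Fin n) ℝ) (b : Eu n → Eu n)
    (u : Eu n → ℝ → ℝ) (Ω : Set (Eu n)) (T : ℝ≥0∞) : Prop :=
  ∀ x ∈ Ω, ∀ t : ℝ, 0 < t → ENNReal.ofReal t < T →
    tD u x t = ε * trMul (A x t) (sH u x t) + dotp (b x) (sG u x t)

/-- `u` is a classical subsolution of `(L)` in `Q_T`. -/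
def SubsolL (ε : ℝ) (A : Eu n → ℝ → Matrix (Fin n) (Fin n) ℝ) (b : Eu n → Eu n)
    (u : Eu n → ℝ → ℝ) (Ω : Set (Eu n)) (T : ℝ≥0∞) : Prop :=
  ∀ x ∈ Ω, ∀ t : ℝ, 0 < t → ENNReal.ofReal t < T →
    tD u x t ≤ ε * trMul (A x t) (sH u x t) + dotp (b x) (sG u x t)

/-- `u` is a classical supersolution of `(L)` in `Q_T`. -/
def SupersolL (ε : ℝ) (A : Eu n → ℝ → Matrix (Fin n) (Fin n) ℝ) (b : Eu n → Eu n)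
    (u : Eu n → ℝ → ℝ) (Ω : Set (Eu n)) (T : ℝ≥0∞) : Prop :=
  ∀ x ∈ Ω, ∀ t : ℝ, 0 < t → ENNReal.ofReal t < T →
    ε * trMul (A x t) (sH u x t) + dotp (b x) (sG u x t) ≤ tD u x t

/-- viscosity subsolution of `H(x,Du) = 0` on `A`. -/
def ViscSub (H : Eu n → Eu n → ℝ) (A : Set (Eu n)) (u : Eu n → ℝ) : Prop :=
  ∀ φ : Eu n → ℝ, ContDiff ℝ 1 φ → ∀ x ∈ A,
    IsLocalMaxOn (fun y => u y - φ y) A x → H x (gradient φ x) ≤ 0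

/-- viscosity supersolution of `H(x,Du) = 0` on `A`. -/
def ViscSup (H : Eu n → Eu n → ℝ) (A : Set (Eu n)) (u : Eu n → ℝ) : Prop :=
  ∀ φ : Eu n → ℝ, ContDiff ℝ 1 φ → ∀ x ∈ A,
    IsLocalMinOn (fun y => u y - φ y) A x → 0 ≤ H x (gradient φ x)

/-- the Hamiltonian `H_α(x,p) = α(x) p·p + b(x)·p`. -/
def Ham (α : Eu n → Matrix (Fin n) (Fin n) ℝ) (b : Eu n → Eu n) (x p : Eu n) : ℝ :=
  mquad (α x) p + dotp (b x) p

/-- the quasi-potential `V_α`: the pointwise supremum (= maximal element) of all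
Lipschitz viscosity subsolutions of `H_α(x,Du)=0` in `Ω` vanishing at the origin. -/
def Vq (α : Eu n → Matrix (Fin n) (Fin n) ℝ) (b : Eu n → Eu n) (Ω : Set (Eu n))
    (x : Eu n) : ℝ :=
  sSup {r | ∃ u : Eu n → ℝ, (∃ K : NNReal, LipschitzOnWith K u (closure Ω)) ∧
    u 0 = 0 ∧ ViscSub (Ham α b) Ω u ∧ r = u x}

/-- `M_α = min_{∂Ω} V_α`. -/
def Mq (α : Eu n → Matrix (Fin n) (Fin n) ℝ) (b : Eu n → Eu n) (Ω : Set (Eu n)) : ℝ :=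
  sInf (Vq α b Ω '' frontier Ω)

/-- `argmin (V_α | ∂Ω)`. -/
def argminV (α : Eu n → Matrix (Fin n) (Fin n) ℝ) (b : Eu n → Eu n)
    (Ω : Set (Eu n)) : Set (Eu n) :=
  {x ∈ frontier Ω | ∀ y ∈ frontier Ω, Vq α b Ω x ≤ Vq α b Ω y}

/-- `Σ_α^m = {x ∈ Ω̄ : V_α(x) ≤ m}`. -/
def SigmaM (α : Eu n → Matrix (Fin n) (Fin n) ℝ) (b : Eu n → Eu n) (Ω : Set (Eu n))
    (m : ℝ) : Set (Eu n) :=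
  {x ∈ closure Ω | Vq α b Ω x ≤ m}

/-- `Ω` is a bounded `C¹` domain with outward unit normal `ν`. -/
def IsBdC1With (Ω : Set (Eu n)) (ν : Eu n → Eu n) : Prop :=
  IsOpen Ω ∧ Bornology.IsBounded Ω ∧
  ∃ ρ : Eu n → ℝ, ContDiff ℝ 1 ρ ∧ Ω = {x | ρ x < 0} ∧
    ∀ x ∈ frontier Ω, gradient ρ x ≠ 0 ∧ ν x = ‖gradient ρ x‖⁻¹ • gradient ρ x

/-- `X` is the flow of `b`, and the origin is globally asymptotically stable. -/
def GAS (b : Eu n → Eu n) (X : ℝ → Eu n → Eu n) : Prop :=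
  (∀ x, X 0 x = x) ∧ (∀ x t, HasDerivAt (fun s => X s x) (b (X t x)) t) ∧
  (∀ x, Tendsto (fun t => X t x) atTop (nhds 0)) ∧
  (∀ ε > (0:ℝ), ∃ δ > (0:ℝ), ∀ x : Eu n, ‖x‖ < δ → ∀ t ≥ (0:ℝ), ‖X t x‖ < ε)

/-- `Ω_δ = {x ∈ Ω : dist(x,∂Ω) > δ}`. -/
def Omd (Ω : Set (Eu n)) (δ : ℝ) : Set (Eu n) := {x ∈ Ω | δ < infDist x (frontier Ω)}

/-- `Ω^Π_δ = {x ∈ Ω̄ : dist(x, ∂Ω \ Π) > δ}`. -/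
def OmPid (Ω Pset : Set (Eu n)) (δ : ℝ) : Set (Eu n) :=
  {x ∈ closure Ω | δ < infDist x (frontier Ω \ Pset)}

/-- the standing assumptions (B). -/
structure SettingB (n : ℕ) where
  Ω : Set (Eu n)
  ν : Eu n → Eu n
  g : Eu n → ℝ
  θ₀ : ℝ
  a : Eu n → ℝ → Matrix (Fin n) (Fin n) ℝ
  b : Eu n → Eu n
  b₀ : ℝ
  r₀ : ℝ
  θ₀_mem : θ₀ ∈ Set.Ioc (0 : ℝ) 1
  domain : IsBdC1With Ω ν
  zero_mem : (0 : Eu n) ∈ Ω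
  g_cont : ContinuousOn g (closure Ω)
  a_cont : ContinuousOn (fun p : Eu n × ℝ => a p.1 p.2) (closure Ω ×ˢ Set.univ)
  a_mem : ∀ x ∈ closure Ω, ∀ c : ℝ, memS θ₀ (a x c)
  b_lip : ∃ K : NNReal, LipschitzWith K b
  b_zero : b 0 = 0
  b_gas : ∃ X : ℝ → Eu n → Eu n, GAS b X
  b_inward : ∀ x ∈ frontier Ω, dotp (b x) (ν x) < 0
  b₀_pos : 0 < b₀
  r₀_pos : 0 < r₀
  ball_sub : closedBall (0 : Eu n) r₀ ⊆ Ω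
  b_coerc : ∀ x ∈ ball (0 : Eu n) r₀, dotp (b x) x ≤ -b₀ * ‖x‖ ^ 2

namespace SettingB

variable (S : SettingB n)

/-- the quasi-potential `V^c` associated with `(a(·,c), b)`. -/
def Vc (c : ℝ) : Eu n → ℝ := Vq (fun x => S.a x c) S.b S.Ω

/-- `M(c) = min_{∂Ω} V^c`. -/
def M (c : ℝ) : ℝ := sInf (S.Vc c '' frontier S.Ω)

/-- `G(c) = {g(x) : x ∈ argmin(V^c|∂Ω)}`. -/
def Gset (c : ℝ) : Set ℝ := S.g '' argminV (fun x => S.a x c) S.b S.Ω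

/-- `G⁺(c) = max G(c)`. -/
def Gp (c : ℝ) : ℝ := sSup (S.Gset c)

/-- `G⁻(c) = min G(c)`. -/
def Gm (c : ℝ) : ℝ := sInf (S.Gset c)

/-- `c₀ = g(0)`. -/
def c0 : ℝ := S.g 0

/-- `g_min = min_{Ω̄} g`. -/
def gmin : ℝ := sInf (S.g '' closure S.Ω)

/-- `g_max = max_{Ω̄} g`. -/
def gmax : ℝ := sSup (S.g '' closure S.Ω)

/-- the crossing value `c₁`. -/
def c1 : ℝ :=
  if S.c0 ≤ S.Gp S.c0 then sInf {c | S.c0 ≤ c ∧ S.Gm c ≤ c}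
  else sSup {c | c ≤ S.c0 ∧ c ≤ S.Gp c}

/-- the function `c̄ : (0,∞) → I_g`. -/
def cbar (l : ℝ) : ℝ :=
  if l < S.M S.c0 ∨ S.c1 = S.c0 then S.c0
  else if S.c0 < S.c1 then min S.c1 (sInf {c | c ∈ Set.Icc S.c0 S.c1 ∧ S.M c = l})
  else max S.c1 (sSup {c | c ∈ Set.Icc S.c1 S.c0 ∧ S.M c = l})

/-- assumption (FK13): `G⁺(c₀) = G⁻(c₀)`. -/
def FK13 : Prop := S.Gp S.c0 = S.Gm S.c0

/-- assumption (FK12). -/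
def FK12 : Prop :=
  ∀ δ₀ > (0:ℝ), ∃ δ ∈ Set.Ioc (0:ℝ) δ₀,
    (S.c1 ≤ S.c0 ∧ S.gmin < S.c1 → S.c1 - δ < S.Gm (S.c1 - δ)) ∧
    (S.c0 ≤ S.c1 ∧ S.c1 < S.gmax → S.Gp (S.c1 + δ) < S.c1 + δ)

/-- `u` is a classical (`C(Q̄) ∩ C^{2,1}(Q)`) solution of the quasi-linear equation (QL). -/
def SolvesQL (ε : ℝ) (u : Eu n → ℝ → ℝ) : Prop :=
  Classical21 u S.Ω ⊤ ∧ SolveL ε (fun x t => S.a x (u x t)) S.b u S.Ω ⊤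

/-- the boundary condition (BC): `u = g` on the parabolic boundary of `Q`. -/
def BC (u : Eu n → ℝ → ℝ) : Prop :=
  (∀ x ∈ closure S.Ω, u x 0 = S.g x) ∧ ∀ x ∈ frontier S.Ω, ∀ t > (0:ℝ), u x t = S.g x

end SettingB


theorem dotp_eq_inner (x y : Eu n) : dotp x y = inner ℝ x y := by
  simp [dotp, PiLp.inner_apply, mul_comm]

theorem dotp_comm' (x y : Eu n) : dotp x y = dotp y x := by
  simp [dotp, mul_comm]

/-- Necessary second order condition in one variable. -/
theorem second_deriv_nonpos {g g' : ℝ → ℝ} {c : ℝ} (hmax : IsLocalMax g 0)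
    (h1 : ∀ᶠ s in 𝓝 (0:ℝ), HasDerivAt g (g' s) s) (h2 : HasDerivAt g' c 0) : c ≤ 0 := by
  by_contra hc
  push Not at hc
  have hd : deriv g =ᶠ[𝓝 0] g' := h1.mono fun s hs => hs.deriv
  have hdd : deriv (deriv g) 0 = c := by rw [hd.deriv_eq, h2.deriv]
  have hmin : IsLocalMin g 0 := isLocalMin_of_deriv_deriv_pos (by rw [hdd]; exact hc)
    hmax.deriv_eq_zero h1.self_of_nhds.continuousAt
  have hconst : g =ᶠ[𝓝 0] fun _ => g 0 := by
    filter_upwards [hmax, hmin] with s h3 h4 using le_antisymm h3 h4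
  have h5 : deriv g =ᶠ[𝓝 0] fun _ => 0 := by
    have := hconst.deriv
    filter_upwards [this] with s hs
    rw [hs]; simp
  have : deriv (deriv g) 0 = 0 := by rw [h5.deriv_eq]; simp
  linarith

theorem grad_apply {f : Eu n → ℝ} {x : Eu n} (p : Eu n) :
    fderiv ℝ f x p = inner ℝ (gradient f x) p := by
  rw [← toDual_gradient]; simp

theorem local_max_conditions {f : Eu n → ℝ} {x z : Eu n} {c : ℝ} (hf : ContDiffAt ℝ 2 f x)
    (hmax : IsLocalMax (fun y => f y - c * ‖y - z‖ ^ 2) x) :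
    gradient f x = (2 * c) • (x - z) ∧
      ∀ p : Eu n, mquad (hessS f x) p ≤ 2 * c * ‖p‖ ^ 2 := by
  have hfd : ∀ᶠ y in 𝓝 x, DifferentiableAt ℝ f y := by
    have := hf.eventually (by simp)
    exact this.mono fun y hy => hy.differentiableAt (by norm_num)
  have hline : ∀ p : Eu n, ∀ s : ℝ, HasDerivAt (fun s : ℝ => x + s • p) p s := by
    intro p s
    simpa using ((hasDerivAt_id s).smul_const p).const_add x
  have hlt : ∀ p : Eu n, Tendsto (fun s : ℝ => x + s • p) (𝓝 0) (𝓝 x) := by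
    intro p
    have := (hline p 0).continuousAt.tendsto
    simpa using this
  have hmax' : ∀ p : Eu n, IsLocalMax
      (fun s : ℝ => f (x + s • p) - c * ‖x + s • p - z‖ ^ 2) 0 := by
    intro p
    have := (hlt p).eventually hmax
    filter_upwards [this] with s hs
    simpa using hs
  have hder : ∀ p : Eu n, ∀ᶠ s in 𝓝 (0:ℝ),
      HasDerivAt (fun s : ℝ => f (x + s • p) - c * ‖x + s • p - z‖ ^ 2)
        ((∑ i, gradient f (x + s • p) i * p i) - c * (2 * inner ℝ (x + s • p - z) p)) s := by
    intro p
    filter_upwards [(hlt p).eventually hfd] with s hs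
    have h1 := hs.hasFDerivAt.comp_hasDerivAt s (hline p s)
    have h2 := (((hline p s).sub_const z).norm_sq).const_mul c
    have h3 := h1.sub h2
    have h4 : fderiv ℝ f (x + s • p) p = ∑ i, gradient f (x + s • p) i * p i := by
      rw [grad_apply, ← dotp_eq_inner]; rfl
    rw [h4] at h3
    exact h3
  constructor
  · have key : ∀ p : Eu n, inner ℝ (gradient f x - (2 * c) • (x - z)) p = 0 := by
      intro p
      have h1 := (hmax' p).hasDerivAt_eq_zero (hder p).self_of_nhds
      have h4 : ∑ i, gradient f (x + (0:ℝ) • p) i * p i = inner ℝ (gradient f x) p := by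
        rw [← dotp_eq_inner]; simp [dotp]
      rw [h4] at h1
      rw [inner_sub_left, inner_smul_left]
      simp at h1 ⊢
      linarith
    have := key (gradient f x - (2 * c) • (x - z))
    rw [inner_self_eq_zero] at this
    exact sub_eq_zero.1 this
  · intro p
    have hgd : DifferentiableAt ℝ (gradient f) x := by
      have : ContDiffAt ℝ 1 (fderiv ℝ f) x := hf.fderiv_right (by norm_num)
      have h2 := this.differentiableAt (by norm_num)
      exact ((InnerProductSpace.toDual ℝ (Eu n)).symm.toContinuousLinearEquiv.toContinuousLinearMap.differentiableAt).comp x h2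
    have hgi : ∀ i, HasFDerivAt (fun y => gradient f y i)
        (fderiv ℝ (fun y => gradient f y i) x) x := by
      intro i
      apply DifferentiableAt.hasFDerivAt
      exact (EuclideanSpace.proj (𝕜 := ℝ) i).differentiableAt.comp x hgd
    have hgi' : ∀ i, HasDerivAt (fun s : ℝ => gradient f (x + s • p) i * p i)
        (fderiv ℝ (fun y => gradient f y i) x p * p i) 0 := by
      intro i
      have h0 : x = x + (0:ℝ) • p := by simp
      have h1 := hgi i
      have h2 : HasFDerivAt (fun y => gradient f y i)
        (fderiv ℝ (fun y => gradient f y i) x) (x + (0:ℝ) • p) := by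
        rw [← h0]; exact h1
      exact (h2.comp_hasDerivAt (0:ℝ) (hline p 0)).mul_const (p i)
    have hsum := HasDerivAt.fun_sum (u := Finset.univ) fun i _ => hgi' i
    have hin : HasDerivAt (fun s : ℝ => c * (2 * inner ℝ (x + s • p - z) p))
        (c * (2 * inner ℝ p p)) 0 := by
      have := ((hline p 0).sub_const z).inner ℝ (hasDerivAt_const (0:ℝ) p)
      simp only [inner_zero_right, zero_add] at this
      exact (this.const_mul 2).const_mul c
    have hle := second_deriv_nonpos (hmax' p) (hder p) (hsum.sub hin)
    have hexp : mquad (hessS f x) p = ∑ i, fderiv ℝ (fun y => gradient f y i) x p * p i := by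
      unfold mquad hessS
      refine Finset.sum_congr rfl fun i _ => ?_
      have hp : p = ∑ j, p j • EuclideanSpace.single j (1:ℝ) := by
        ext k
        simp [Finset.sum_apply, Pi.single_apply]
      conv_rhs => rw [hp]
      rw [map_sum, ← hp, Finset.sum_mul]
      refine Finset.sum_congr rfl fun j _ => ?_
      rw [map_smul, smul_eq_mul]; ring
    rw [hexp]
    rw [real_inner_self_eq_norm_sq] at hle
    linarith

theorem trMul_le {A H : Matrix (Fin n) (Fin n) ℝ} {θ c : ℝ} (hθ : 0 < θ) (hc : 0 ≤ c)
    (hA : memS θ A) (hH : ∀ p : Eu n, mquad H p ≤ c * ‖p‖ ^ 2) :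
    trMul A H ≤ c * (n * θ⁻¹) := by
  have hps : A.PosSemidef := by
    rw [Matrix.posSemidef_iff_dotProduct_mulVec]
    refine ⟨by
      rw [Matrix.IsHermitian, Matrix.conjTranspose_eq_transpose_of_trivial]; exact hA.1, fun x => ?_⟩
    have := (hA.2 (WithLp.toLp 2 x)).1
    have h2 : mquad A (WithLp.toLp 2 x) = star x ⬝ᵥ (A.mulVec x) := by
      simp only [mquad, dotProduct, Matrix.mulVec, Finset.mul_sum]
      refine Finset.sum_congr rfl fun i _ => Finset.sum_congr rfl fun j _ => ?_
      simp; ring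
    rw [← h2]
    exact le_trans (by positivity) this
  obtain ⟨m, v, hv⟩ := Matrix.posSemidef_iff_eq_sum_vecMulVec.mp hps
  have hAij : ∀ i j, A i j = ∑ k, v k i * v k j := by
    intro i j
    rw [hv]; simp [Matrix.sum_apply, Matrix.vecMulVec_apply]
  have htr : trMul A H = ∑ k, mquad H (WithLp.toLp 2 (v k)) := by
    simp only [trMul, mquad, hAij, Finset.sum_mul]
    rw [Finset.sum_comm]
    symm
    rw [Finset.sum_comm]
    refine Finset.sum_congr rfl fun i _ => ?_
    rw [Finset.sum_comm]
    refine Finset.sum_congr rfl fun j _ => Finset.sum_congr rfl fun k _ => ?_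
    ring
  have htr2 : ∑ k, ‖(WithLp.toLp 2 (v k) : Eu n)‖ ^ 2 = ∑ i, A i i := by
    simp only [EuclideanSpace.real_norm_sq_eq, hAij]
    rw [Finset.sum_comm]
    refine Finset.sum_congr rfl fun k _ => Finset.sum_congr rfl fun i _ => ?_
    exact pow_two _
  have hdiag : ∀ i, A i i ≤ θ⁻¹ := by
    intro i
    have := (hA.2 (EuclideanSpace.single i 1)).2
    simpa [mquad, Pi.single_apply] using this
  calc trMul A H ≤ ∑ k, c * ‖(WithLp.toLp 2 (v k) : Eu n)‖ ^ 2 := by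
        rw [htr]; exact Finset.sum_le_sum fun k _ => hH _
    _ = c * ∑ i, A i i := by rw [← Finset.mul_sum, htr2]
    _ ≤ c * (n * θ⁻¹) := by
        gcongr
        calc ∑ i, A i i ≤ ∑ i : Fin n, θ⁻¹ := Finset.sum_le_sum fun i _ => hdiag i
          _ = n * θ⁻¹ := by simp

/-- Comparison with the quadratic barrier along a backward trajectory. -/
theorem comparison {θ₀ ε K M C t₁ t₀ : ℝ} {Ω : Set (Eu n)} {b : Eu n → Eu n}
    {A : Eu n → ℝ → Matrix (Fin n) (Fin n) ℝ} {T : ℝ≥0∞} {u : Eu n → ℝ → ℝ} {y : ℝ → Eu n}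
    (hθ : 0 < θ₀) (hε : 0 < ε) (hK : 0 ≤ K) (hM : 0 ≤ M)
    (hΩ : IsOpen Ω) (hΩb : Bornology.IsBounded Ω)
    (hb : ∀ x z, ‖b x - b z‖ ≤ K * ‖x - z‖)
    (ht₁ : 0 ≤ t₁) (ht₀ : ENNReal.ofReal t₀ < T)
    (hC : 2 * (M * Real.exp (2 * K * (t₀ - t₁))) * (n * θ₀⁻¹) ≤ C)
    (hA : MatC θ₀ A Ω T) (hu : Classical21 u Ω T) (hsol : SolveL ε A b u Ω T)
    (hy : ∀ t, HasDerivAt y (-b (y t)) t)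
    (hini : ∀ x ∈ closure Ω, u x t₁ ≤ M * ‖x - y t₁‖ ^ 2)
    (hbd : ∀ x ∈ frontier Ω, ∀ t ∈ Icc t₁ t₀, u x t ≤ M * ‖x - y t‖ ^ 2) :
    ∀ x ∈ closure Ω, ∀ t ∈ Icc t₁ t₀,
      u x t ≤ M * Real.exp (2 * K * (t - t₁)) * ‖x - y t‖ ^ 2 + C * ε * (t - t₁) := by
  have hC0 : 0 ≤ C := le_trans (by positivity) hC
  intro xs hxs ts hts
  by_contra hcon
  push Not at hcon
  set w : Eu n → ℝ → ℝ := fun x t =>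
    M * Real.exp (2 * K * (t - t₁)) * ‖x - y t‖ ^ 2 + C * ε * (t - t₁) with hw
  have hpos : 0 < u xs ts - w xs ts := by simp only [hw]; linarith
  obtain ⟨η, hη, hη'⟩ : ∃ η > 0, η * (ts - t₁) < u xs ts - w xs ts := by
    have h1 : 0 ≤ ts - t₁ := by linarith [hts.1]
    refine ⟨(u xs ts - w xs ts) / (ts - t₁ + 1), by positivity, ?_⟩
    rw [div_mul_eq_mul_div, div_lt_iff₀ (by linarith)]
    nlinarith
  set v : Eu n × ℝ → ℝ := fun p => u p.1 p.2 - w p.1 p.2 - η * (p.2 - t₁) with hv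
  have hyc : Continuous y := continuous_iff_continuousAt.2 fun t => (hy t).continuousAt
  have hsubc : closure Ω ×ˢ Icc t₁ t₀ ⊆ cylC Ω T := by
    rintro ⟨x, t⟩ ⟨hx, ht⟩
    exact ⟨hx, ht₁.trans ht.1, (ENNReal.ofReal_le_ofReal ht.2).trans ht₀.le⟩
  have hwc : Continuous fun p : Eu n × ℝ => w p.1 p.2 := by
    simp only [hw]; fun_prop
  have hvc : ContinuousOn v (closure Ω ×ˢ Icc t₁ t₀) := by
    have h1 := hu.1.mono hsubc
    exact (h1.sub hwc.continuousOn).sub (by fun_prop)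
  have hcomp : IsCompact (closure Ω ×ˢ Icc t₁ t₀) := hΩb.isCompact_closure.prod isCompact_Icc
  obtain ⟨⟨x, t⟩, ⟨hx, ht⟩, hmax⟩ := hcomp.exists_isMaxOn ⟨(xs, ts), hxs, hts⟩ hvc
  simp only at hx ht
  have hvpos : 0 < v (x, t) := by
    refine lt_of_lt_of_le ?_ (hmax (⟨hxs, hts⟩ : (xs, ts) ∈ closure Ω ×ˢ Icc t₁ t₀))
    simp only [hv]; linarith
  have htt : t₁ < t := by
    rcases eq_or_lt_of_le ht.1 with h | h
    · exfalso
      have := hini x hx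
      simp only [hv, hw, ← h] at hvpos
      simp at hvpos
      linarith
    · exact h
  have hexp1 : 1 ≤ Real.exp (2 * K * (t - t₁)) := by
    apply Real.one_le_exp
    have : 0 ≤ t - t₁ := by linarith
    positivity
  have hxΩ : x ∈ Ω := by
    by_contra hxn
    have hxf : x ∈ frontier Ω := by rw [hΩ.frontier_eq]; exact ⟨hx, hxn⟩
    have h1 := hbd x hxf t ht
    have h2 : M * ‖x - y t‖ ^ 2 ≤ M * Real.exp (2 * K * (t - t₁)) * ‖x - y t‖ ^ 2 := by
      gcongr
      nlinarith
    have h3 : 0 ≤ C * ε * (t - t₁) := by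
      have : 0 ≤ t - t₁ := by linarith
      positivity
    have h4 : 0 ≤ η * (t - t₁) := by
      have : 0 ≤ t - t₁ := by linarith
      positivity
    simp only [hv, hw] at hvpos
    linarith
  have ht0 : 0 < t := lt_of_le_of_lt ht₁ htt
  have htT : ENNReal.ofReal t < T := lt_of_le_of_lt (ENNReal.ofReal_le_ofReal ht.2) ht₀
  obtain ⟨hux, hut⟩ := hu.2.1 x hxΩ t ht0 htT
  set E := M * Real.exp (2 * K * (t - t₁)) with hE
  have hE0 : 0 ≤ E := by positivity
  -- spatial conditions
  have hloc : IsLocalMax (fun z => u z t - E * ‖z - y t‖ ^ 2) x := by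
    filter_upwards [hΩ.mem_nhds hxΩ] with z hz
    have h1 := hmax (⟨subset_closure hz, ht⟩ : (z, t) ∈ closure Ω ×ˢ Icc t₁ t₀)
    simp only [hv, hw, mem_ofPred_eq] at h1
    linarith
  obtain ⟨hgr, hhess⟩ := local_max_conditions hux hloc
  have htr := trMul_le (c := 2 * E) hθ (by positivity)
    (hA.2 (x, t) ⟨hx, ht0.le, htT.le⟩) hhess
  have heq := hsol x hxΩ t ht0 htT
  have hHeq : sH u x t = hessS (fun y => u y t) x := rfl
  rw [hHeq, show sG u x t = (2 * E) • (x - y t) from hgr, dotp_eq_inner, inner_smul_right] at heq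
  -- time condition
  have hwd : HasDerivAt (fun s => w x s)
      (E * (2 * K) * ‖x - y t‖ ^ 2 + E * (2 * inner ℝ (x - y t) (b (y t))) + C * ε) t := by
    have h1 : HasDerivAt (fun s => M * Real.exp (2 * K * (s - t₁))) (E * (2 * K)) t := by
      have h2 : HasDerivAt (fun s => 2 * K * (s - t₁)) (2 * K) t := by
        simpa using ((hasDerivAt_id t).sub_const t₁).const_mul (2 * K)
      have := (h2.exp).const_mul M
      rw [hE, mul_assoc]; exact this
    have h3 : HasDerivAt (fun s => ‖x - y s‖ ^ 2) (2 * inner ℝ (x - y t) (b (y t))) t := by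
      have := ((hy t).const_sub x).norm_sq
      simpa using this
    have h4 : HasDerivAt (fun s => C * ε * (s - t₁)) (C * ε) t := by
      simpa using ((hasDerivAt_id t).sub_const t₁).const_mul (C * ε)
    exact (h1.mul h3).add h4
  have hvd : HasDerivAt (fun s => v (x, s))
      (tD u x t - (E * (2 * K) * ‖x - y t‖ ^ 2 + E * (2 * inner ℝ (x - y t) (b (y t))) + C * ε)
        - η) t := by
    have h4 : HasDerivAt (fun s => η * (s - t₁)) η t := by
      simpa using ((hasDerivAt_id t).sub_const t₁).const_mul η
    exact (hut.hasDerivAt.sub hwd).sub h4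
  have hvge : 0 ≤ tD u x t -
      (E * (2 * K) * ‖x - y t‖ ^ 2 + E * (2 * inner ℝ (x - y t) (b (y t))) + C * ε) - η := by
    have hslope := (hasDerivAt_iff_tendsto_slope_left_right.1 hvd).1
    refine ge_of_tendsto hslope ?_
    filter_upwards [Ioo_mem_nhdsLT htt] with s hs
    have h1 := hmax (⟨hx, hs.1.le, hs.2.le.trans ht.2⟩ : (x, s) ∈ closure Ω ×ˢ Icc t₁ t₀)
    simp only [mem_ofPred_eq] at h1
    rw [slope_def_field]
    exact div_nonneg_of_nonpos (by linarith) (by linarith [hs.2])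
  -- conclusion
  have hip : inner ℝ (b x) (x - y t) - inner ℝ (x - y t) (b (y t)) ≤ K * ‖x - y t‖ ^ 2 := by
    rw [real_inner_comm (b (y t)) (x - y t), ← inner_sub_left]
    calc inner ℝ (b x - b (y t)) (x - y t) ≤ ‖b x - b (y t)‖ * ‖x - y t‖ := real_inner_le_norm _ _
      _ ≤ K * ‖x - y t‖ * ‖x - y t‖ := by gcongr; exact hb _ _
      _ = _ := by ring
  have hEC : 2 * E * (n * θ₀⁻¹) ≤ C := by
    refine le_trans ?_ hC
    rw [hE]
    gcongr
    exact ht.2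
  have h5 : ε * trMul (A x t) (hessS (fun y => u y t) x) ≤ ε * C := by
    gcongr; exact htr.trans hEC
  have h6 := mul_le_mul_of_nonneg_left hip (by positivity : 0 ≤ 2 * E)
  rw [heq] at hvge
  linarith

theorem flow_lip {b : Eu n → Eu n} {X : ℝ → Eu n → Eu n} {K : NNReal} (hb : LipschitzWith K b)
    (hX : GAS b X) {T : ℝ} {s : ℝ} (hs : s ∈ Icc 0 T) (x z : Eu n) :
    dist (X s x) (X s z) ≤ Real.exp (K * T) * dist x z := by
  have h := dist_le_of_trajectories_ODE (v := fun _ => b) (K := K) (a := 0) (b := T)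
    (f := fun s => X s x) (g := fun s => X s z) (δ := dist x z) (fun _ => hb)
    (fun t _ => (hX.2.1 x t).continuousAt.continuousWithinAt)
    (fun t _ => (hX.2.1 x t).hasDerivWithinAt)
    (fun t _ => (hX.2.1 z t).continuousAt.continuousWithinAt)
    (fun t _ => (hX.2.1 z t).hasDerivWithinAt) (by simp [hX.1]) s hs
  refine h.trans ?_
  rw [mul_comm]
  gcongr
  linarith [hs.2]

/-- There is a uniform bound on the times needed to reach a small ball. -/
theorem uniform_time {b : Eu n → Eu n} {X : ℝ → Eu n → Eu n} {K : NNReal} (hb : LipschitzWith K b)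
    (hX : GAS b X) {S : Set (Eu n)} (hS : IsCompact S) {r : ℝ} (hr : 0 < r) :
    ∃ T > 0, ∀ x ∈ S, ∃ τ ∈ Icc 0 T, ‖X τ x‖ < r := by
  have h1 : ∀ x : Eu n, ∃ τ : ℝ, 0 ≤ τ ∧ ‖X τ x‖ < r := by
    intro x
    have h := (hX.2.2.1 x).norm
    rw [norm_zero] at h
    exact ((eventually_ge_atTop (0:ℝ)).and (h.eventually_lt_const hr)).exists
  choose τ hτ0 hτ using h1
  obtain ⟨F, -, hF⟩ := hS.elim_nhds_subcover (fun x => {z | ‖X (τ x) z‖ < r}) (by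
    intro x _
    have hc : Continuous (X (τ x)) := by
      refine LipschitzWith.continuous (K := ⟨Real.exp (K * τ x), (Real.exp_pos _).le⟩) ?_
      exact LipschitzWith.of_dist_le_mul fun a c => flow_lip hb hX ⟨hτ0 x, le_rfl⟩ a c
    exact (isOpen_lt hc.norm continuous_const).mem_nhds (hτ x))
  refine ⟨1 + ∑ x ∈ F, τ x, by have := Finset.sum_nonneg (fun x (_ : x ∈ F) => hτ0 x); linarith, ?_⟩
  intro x hx
  have := hF hx
  simp only [mem_iUnion] at this
  obtain ⟨z, hz, hxz⟩ := this
  refine ⟨τ z, ⟨hτ0 z, ?_⟩, hxz⟩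
  have := Finset.single_le_sum (fun x (_ : x ∈ F) => hτ0 x) hz
  linarith

theorem flow_inside {Ω : Set (Eu n)} {ν : Eu n → Eu n} {b : Eu n → Eu n}
    {X : ℝ → Eu n → Eu n} (hdom : IsBdC1With Ω ν)
    (hin : ∀ x ∈ frontier Ω, dotp (b x) (ν x) < 0) (hX : GAS b X) {x : Eu n}
    (hx : x ∈ closure Ω) {s : ℝ} (hs : 0 < s) : X s x ∈ Ω := by
  obtain ⟨hΩ, -, ρ, hρ, hΩρ, hfr⟩ := hdom
  have hρle : ∀ z ∈ closure Ω, ρ z ≤ 0 := by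
    have : closure Ω ⊆ {z | ρ z ≤ 0} := closure_minimal (by rw [hΩρ]; exact fun z hz => show ρ z ≤ 0 from le_of_lt hz)
      (isClosed_le hρ.continuous continuous_const)
    exact this
  have hρfr : ∀ z ∈ frontier Ω, ρ z = 0 := by
    intro z hz
    rw [hΩ.frontier_eq] at hz
    refine le_antisymm (hρle z hz.1) ?_
    by_contra h
    exact hz.2 (by rw [hΩρ]; exact not_le.1 h)
  have hder : ∀ t, HasDerivAt (fun s => ρ (X s x)) (inner ℝ (gradient ρ (X t x)) (b (X t x))) t := by
    intro t
    have h1 := ((hρ.differentiable (by norm_num)) (X t x)).hasFDerivAt.comp_hasDerivAt t (hX.2.1 x t)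
    rw [grad_apply] at h1
    exact h1
  have hneg : ∀ z ∈ frontier Ω, inner ℝ (gradient ρ z) (b z) < 0 := by
    intro z hz
    have h1 := hin z hz
    rw [(hfr z hz).2, dotp_eq_inner, inner_smul_right, real_inner_comm] at h1
    have h2 : 0 < ‖gradient ρ z‖⁻¹ := inv_pos.2 (norm_pos_iff.2 (hfr z hz).1)
    by_contra h
    push Not at h
    have := mul_nonneg h2.le h
    linarith
  have hXc : Continuous fun t => X t x :=
    continuous_iff_continuousAt.2 fun t => (hX.2.1 x t).continuousAt
  have hcl : Icc 0 s ⊆ {t | X t x ∈ closure Ω} := by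
    apply IsClosed.Icc_subset_of_forall_mem_nhdsWithin
    · exact (isClosed_closure.preimage hXc).inter isClosed_Icc
    · simpa [hX.1] using hx
    · rintro t ⟨ht, -⟩
      by_cases h : X t x ∈ Ω
      · apply mem_nhdsWithin_of_mem_nhds
        filter_upwards [hXc.continuousAt.preimage_mem_nhds (hΩ.mem_nhds h)] with z hz
        exact subset_closure hz
      · have hf : X t x ∈ frontier Ω := by rw [hΩ.frontier_eq]; exact ⟨ht, h⟩
        have hsl := (hasDerivAt_iff_tendsto_slope_left_right.1 (hder t)).2
        filter_upwards [hsl.eventually_lt_const (hneg _ hf), self_mem_nhdsWithin] with z hz hz'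
        rw [slope_def_field, hρfr _ hf, sub_zero] at hz
        have hzt : 0 < z - t := sub_pos.2 hz'
        have : ρ (X z x) < 0 := by
          by_contra h; push Not at h
          have := div_nonneg h hzt.le
          linarith
        apply subset_closure
        rw [hΩρ]; exact this
  by_contra h
  have hf : X s x ∈ frontier Ω := by
    rw [hΩ.frontier_eq]; exact ⟨hcl ⟨hs.le, le_rfl⟩, h⟩
  have hsl := (hasDerivAt_iff_tendsto_slope_left_right.1 (hder s)).1
  obtain ⟨z, hz, hz0, hzs⟩ :=
    ((hsl.eventually_lt_const (hneg _ hf)).and (Ioo_mem_nhdsLT hs)).exists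
  rw [slope_def_field, hρfr _ hf, sub_zero] at hz
  have h1 := hρle _ (hcl ⟨hz0.le, hzs.le⟩)
  have := div_nonneg_of_nonpos h1 (by linarith : z - s ≤ 0)
  linarith

/-- Proposition 2.4 (spreading of smallness). -/
theorem stmt6 {n : ℕ} (θ₀ : ℝ) (hθ : θ₀ ∈ Set.Ioc (0:ℝ) 1)
    (Ω : Set (Eu n)) (ν : Eu n → Eu n) (b : Eu n → Eu n) (b₀ r₀ : ℝ)
    (hdom : IsBdC1With Ω ν) (h0 : (0 : Eu n) ∈ Ω)
    (hbl : ∃ K : NNReal, LipschitzWith K b) (hb0 : b 0 = 0)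
    (hgas : ∃ X : ℝ → Eu n → Eu n, GAS b X)
    (hin : ∀ x ∈ frontier Ω, dotp (b x) (ν x) < 0)
    (hb₀ : 0 < b₀) (hr₀ : 0 < r₀) (hsub : closedBall (0 : Eu n) r₀ ⊆ Ω)
    (hco : ∀ x ∈ ball (0 : Eu n) r₀, dotp (b x) x ≤ -b₀ * ‖x‖ ^ 2)
    (Pset : Set (Eu n)) (hP : ∃ U : Set (Eu n), IsOpen U ∧ Pset = U ∩ frontier Ω)
    (δ : ℝ) (hδ : δ ∈ Set.Ioo 0 r₀) :
    ∃ Tδ > (0:ℝ), ∃ ε₀ ∈ Set.Ioo (0:ℝ) 1,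
      ∀ ε ∈ Set.Ioo (0:ℝ) ε₀,
      ∀ (A : Eu n → ℝ → Matrix (Fin n) (Fin n) ℝ) (T : ℝ≥0∞),
        ENNReal.ofReal Tδ < T → MatC θ₀ A Ω T →
        ∀ u : Eu n → ℝ → ℝ, Classical21 u Ω T → SolveL ε A b u Ω T →
        (∀ x ∈ Ω, ∀ t : ℝ, 0 ≤ t → ENNReal.ofReal t < T → u x t ≤ 1) →
        (∀ x ∈ ball (0 : Eu n) δ ∪ Pset, ∀ t : ℝ, 0 ≤ t → ENNReal.ofReal t < T →
          u x t ≤ 0) →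
        ∀ x ∈ OmPid Ω Pset δ, ∀ t : ℝ, Tδ ≤ t → ENNReal.ofReal t < T → u x t ≤ δ := by
  obtain ⟨K, hK⟩ := hbl
  obtain ⟨X, hX⟩ := hgas
  obtain ⟨U, hU, hPU⟩ := hP
  have hΩ := hdom.1
  have hΩb := hdom.2.1
  have hδ0 : 0 < δ := hδ.1
  have hcomp : IsCompact (closure Ω) := hΩb.isCompact_closure
  obtain ⟨Tδ, hTδ, hreach⟩ := uniform_time hK hX hcomp (half_pos hδ0)
  -- distance of trajectories to the bad part of the boundary
  set F := frontier Ω \ Pset with hF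
  have hFc : IsClosed F := by
    have : F = frontier Ω \ U := by
      rw [hF, hPU]; ext z; simp only [Set.mem_sdiff, mem_inter_iff]; tauto
    rw [this]
    exact isClosed_frontier.sdiff hU
  set K0 : Set (Eu n) := closure Ω ∩ {x | δ ≤ infDist x F} with hK0
  have hK0c : IsCompact K0 :=
    hcomp.inter_right (isClosed_le continuous_const (continuous_infDist_pt F))
  have hXc : ContinuousOn (fun p : Eu n × ℝ => X p.2 p.1) (K0 ×ˢ Icc 0 Tδ) := by
    refine continuousOn_prod_of_continuousOn_lipschitzOnWith _
      ⟨Real.exp (K * Tδ), (Real.exp_pos _).le⟩ ?_ ?_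
    · intro x _ t _
      exact (hX.2.1 x t).continuousAt.continuousWithinAt
    · intro s hs
      exact LipschitzOnWith.of_dist_le_mul fun x _ z _ => flow_lip hK hX hs x z
  have hIc := (hK0c.prod (isCompact_Icc (a := (0:ℝ)) (b := Tδ))).image_of_continuousOn hXc
  have hdisj : Disjoint ((fun p : Eu n × ℝ => X p.2 p.1) '' (K0 ×ˢ Icc 0 Tδ)) F := by
    rw [Set.disjoint_left]
    rintro _ ⟨⟨x, s⟩, ⟨hx, hs⟩, rfl⟩ hmem
    simp only at hx hs hmem
    rcases eq_or_lt_of_le hs.1 with h | h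
    · rw [← h, hX.1] at hmem
      have h1 : δ ≤ infDist x F := hx.2
      rw [infDist_zero_of_mem hmem] at h1
      linarith
    · have h1 := flow_inside hdom hin hX hx.1 h
      have h2 := hmem.1
      rw [hΩ.frontier_eq] at h2
      exact h2.2 h1
  obtain ⟨c, hc, hcd⟩ := exists_pos_forall_lt_edist hIc hFc hdisj
  have hc0 : (0:ℝ) < c := by exact_mod_cast hc
  have hcd' : ∀ x ∈ K0, ∀ s ∈ Icc 0 Tδ, ∀ z ∈ F, (c:ℝ) ≤ ‖z - X s x‖ := by
    intro x hx s hs z hz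
    have h1 := hcd _ ⟨(x, s), ⟨hx, hs⟩, rfl⟩ z hz
    rw [edist_comm, edist_nndist] at h1
    have h2 : c < nndist z (X s x) := by exact_mod_cast h1
    rw [← dist_eq_norm, ← coe_nndist]
    exact_mod_cast h2.le
  -- constants
  set r := min (c:ℝ) (δ / 2) with hr
  have hr0 : 0 < r := lt_min hc0 (half_pos hδ0)
  set M := (r ^ 2)⁻¹ with hM
  have hM0 : 0 < M := by positivity
  have hMr : ∀ d : ℝ, r ≤ d → 1 ≤ M * d ^ 2 := by
    intro d hd
    calc (1:ℝ) = M * r ^ 2 := by rw [hM, inv_mul_cancel₀ (by positivity)]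
      _ ≤ M * d ^ 2 := by gcongr
  set C := 2 * (M * Real.exp (2 * K * Tδ)) * (n * θ₀⁻¹) with hC
  have hθ0 : 0 < θ₀ := hθ.1
  have hC0 : 0 ≤ C := by positivity
  refine ⟨Tδ, hTδ, min (1 / 2) (δ / (C * Tδ + 1)), ⟨by positivity, ?_⟩, ?_⟩
  · exact lt_of_le_of_lt (min_le_left _ _) (by norm_num)
  intro ε hε A T hT hA u hu hsol hu1 hu0 x hx t ht htT
  have hu1' : ∀ z ∈ closure Ω, ∀ s : ℝ, 0 ≤ s → ENNReal.ofReal s < T → u z s ≤ 1 := by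
    intro z hz s hs hsT
    have hcont : ContinuousOn (fun z => u z s) (closure Ω) :=
      hu.1.comp (by fun_prop) (fun z hz => ⟨hz, hs, hsT.le⟩ :
        MapsTo (fun z : Eu n => (z, s)) (closure Ω) (cylC Ω T))
    exact ((hcont z hz).mono subset_closure).closure_le hz continuousWithinAt_const
      (fun w hw => hu1 w hw s hs hsT)
  have hxK : x ∈ K0 := ⟨hx.1, hx.2.le⟩
  obtain ⟨τ, hτ, hτr⟩ := hreach x hx.1
  have hτ0 := hτ.1
  have hτT := hτ.2
  have hcmp := comparison (θ₀ := θ₀) (ε := ε) (K := K) (M := M) (C := C) (t₁ := t - τ) (t₀ := t)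
    (y := fun s => X (t - s) x) hθ0 hε.1 K.2 hM0.le hΩ hΩb
    (fun p q => by simpa [dist_eq_norm] using hK.dist_le_mul p q)
    (by linarith) htT
    (by
      rw [hC]
      gcongr
      linarith)
    hA hu hsol
    (by
      intro s
      have h1 := (hX.2.1 x (t - s)).scomp s ((hasDerivAt_id s).const_sub t)
      rw [neg_one_smul] at h1
      exact h1)
    (by
      intro z hz
      have hnn : 0 ≤ t - τ := by linarith
      have hlt : ENNReal.ofReal (t - τ) < T :=
        lt_of_le_of_lt (ENNReal.ofReal_le_ofReal (by linarith)) htT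
      by_cases hzb : z ∈ ball (0 : Eu n) δ
      · exact (hu0 z (Or.inl hzb) _ hnn hlt).trans (by positivity)
      · refine (hu1' z hz _ hnn hlt).trans (hMr _ ?_)
        have h1 : δ ≤ ‖z‖ := by simpa using hzb
        have h2 := norm_sub_norm_le z (X τ x)
        simp only [sub_sub_cancel]
        exact (min_le_right _ _).trans (by linarith))
    (by
      intro z hz s hs
      have hnn : 0 ≤ s := by linarith [hs.1]
      have hlt : ENNReal.ofReal s < T :=
        lt_of_le_of_lt (ENNReal.ofReal_le_ofReal hs.2) htT
      by_cases hzP : z ∈ Pset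
      · exact (hu0 z (Or.inr hzP) _ hnn hlt).trans (by positivity)
      · refine (hu1' z (frontier_subset_closure hz) _ hnn hlt).trans (hMr _ ?_)
        refine (min_le_left _ _).trans ?_
        exact hcd' x hxK (t - s) ⟨by linarith [hs.2], by linarith [hs.1]⟩ z ⟨hz, hzP⟩)
    x hx.1 t ⟨by linarith, le_rfl⟩
  simp only [sub_self, hX.1, norm_zero, sub_sub_cancel] at hcmp
  have h1 : ε < δ / (C * Tδ + 1) := lt_of_lt_of_le hε.2 (min_le_right _ _)
  rw [lt_div_iff₀ (by positivity)] at h1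
  have h2 : C * ε * τ ≤ C * ε * Tδ := by
    have := hε.1
    gcongr
  have := hε.1
  nlinarith
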